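/- Inducing paths imply inseparability: let G = (V, E_d, E_bi) be a DMG and v, w ∈ V. If there exists an (asymmetric) inducing path from v to w in G, then ({v}, {w}, C) ∉ I_E^G for every C ⊆ V \ {v}; that is, w is inseparable from v in the independence model I_E^G. -/

import Mathlib

namespace ESepPaper

/-- A directed mixed graph: directed edges and bidirected edges over a node type `V`.
A directed graph (DG) is a DMG with `Ebi = ∅`. -/
structure DMG (V : Type) where
  Ed : Set (V × V)
  Ebi : Set (Sym2 V)

variable {V : Type}

/-- `G.ancestor u v` : there is a directed path `u → … → v` (possibly trivial). -/
def DMG.ancestor (G : DMG V) : V → V → Prop :=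
  Relation.ReflTransGen (fun u v => (u, v) ∈ G.Ed)

/-- Ancestors of a set `C`. -/
def DMG.anc (G : DMG V) (C : Set V) : Set V := {u | ∃ v ∈ C, G.ancestor u v}

/-- Strongly connected component of `v`. -/
def DMG.scc (G : DMG V) (v : V) : Set V := {w | G.ancestor w v ∧ G.ancestor v w}

/-- Parents of a set of nodes. -/
def DMG.pa (G : DMG V) (S : Set V) : Set V := {w | ∃ v ∈ S, (w, v) ∈ G.Ed}

/-- Kind of a traversed edge on a walk: forward directed, backward directed, or bidirected. -/
inductive LinkType | fwd | bwd | bi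
deriving DecidableEq

/-- Validity of a link of kind `t` between consecutive walk nodes `u` and `v`. -/
def DMG.linkOK (G : DMG V) (u v : V) : LinkType → Prop
  | .fwd => (u, v) ∈ G.Ed
  | .bwd => (v, u) ∈ G.Ed
  | .bi => s(u, v) ∈ G.Ebi

/-- Arrowhead at the second (right) endpoint of the link. -/
def LinkType.headR : LinkType → Prop
  | .fwd => True
  | .bwd => False
  | .bi => True

/-- Arrowhead at the first (left) endpoint of the link. -/
def LinkType.headL : LinkType → Prop
  | .fwd => False
  | .bwd => True
  | .bi => True

/-- Tail at the second (right) endpoint. -/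
def LinkType.tailR (t : LinkType) : Prop := t = .bwd

/-- Tail at the first (left) endpoint. -/
def LinkType.tailL (t : LinkType) : Prop := t = .fwd

/-- Walks in a DMG. -/
inductive DMG.Walk (G : DMG V) : V → V → Type
  | nil (v : V) : DMG.Walk G v v
  | cons {u v w : V} (t : LinkType) (h : G.linkOK u v t) (p : DMG.Walk G v w) : DMG.Walk G u w

/-- An interior node on a walk, whose incoming link is `t1` and outgoing link is `t2`,
is a collider iff both links have an arrowhead at it. -/
def colliderAt (t1 t2 : LinkType) : Prop := t1.headR ∧ t2.headL

/-- An interior non-collider `v` between neighbours `u` (incoming link `t1`) and `w`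
(outgoing link `t2`) is unblockable: on every side where the link has a tail at `v`, the
corresponding neighbour lies in `scc_G(v)` (left-chain/right-chain/fork cases). -/
def unblockableAt (G : DMG V) (u v w : V) (t1 t2 : LinkType) : Prop :=
  (t1.tailR → u ∈ G.scc v) ∧ (t2.tailL → w ∈ G.scc v)

namespace DMG.Walk

variable {G : DMG V}

/-- First node of a walk. -/
def first {a b : V} (_ : G.Walk a b) : V := a

def length : {a b : V} → G.Walk a b → ℕ
  | _, _, .nil _ => 0
  | _, _, .cons _ _ p => p.length + 1

def support : {a b : V} → G.Walk a b → List V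
  | a, _, .nil _ => [a]
  | a, _, .cons _ _ p => a :: p.support

/-- Auxiliary: σ-openness of the remainder of a walk, where `u` is the previous node and
`t1` the link from `u` into the current first node. -/
def sigmaOpenAux (C : Set V) : (u : V) → LinkType → {b c : V} → G.Walk b c → Prop
  | _, _, _, _, .nil _ => True
  | u, t1, v, _, .cons t2 _ q =>
      ((colliderAt t1 t2 → v ∈ G.anc C) ∧
       (¬ colliderAt t1 t2 → ¬ unblockableAt G u v q.first t1 t2 → v ∉ C)) ∧
      sigmaOpenAux C v t2 q

/-- The walk is σ-open given `C`: every collider on it is an ancestor of a node of `C`, and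
no blockable non-collider on it lies in `C`. -/
def sigmaOpen (C : Set V) : {a b : V} → G.Walk a b → Prop
  | _, _, .nil _ => True
  | a, _, .cons t _ q => sigmaOpenAux C a t q

/-- All links are forward directed. -/
def IsDirected : {a b : V} → G.Walk a b → Prop
  | _, _, .nil _ => True
  | _, _, .cons t _ p => t = .fwd ∧ p.IsDirected

/-- Interior nodes of the walk (all nodes except the two endpoints). -/
def interior {a b : V} (p : G.Walk a b) : List V := p.support.tail.dropLast

/-- Arrowhead at the first endpoint. -/
def headAtStart : {a b : V} → G.Walk a b → Prop
  | _, _, .nil _ => False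
  | _, _, .cons t _ _ => t.headL

def headAtEndAux : LinkType → {a b : V} → G.Walk a b → Prop
  | t, _, _, .nil _ => t.headR
  | _, _, _, .cons t _ q => headAtEndAux t q

/-- Arrowhead at the last endpoint. -/
def headAtEnd : {a b : V} → G.Walk a b → Prop
  | _, _, .nil _ => False
  | _, _, .cons t _ q => headAtEndAux t q

def noCollidersAux : LinkType → {a b : V} → G.Walk a b → Prop
  | _, _, _, .nil _ => True
  | t1, _, _, .cons t2 _ q => ¬ colliderAt t1 t2 ∧ noCollidersAux t2 q

/-- There is no collider on the walk. -/
def NoColliders : {a b : V} → G.Walk a b → Prop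
  | _, _, .nil _ => True
  | _, _, .cons t _ q => noCollidersAux t q

def collidersInAux (S : Set V) : LinkType → {a b : V} → G.Walk a b → Prop
  | _, _, _, .nil _ => True
  | t1, v, _, .cons t2 _ q => (colliderAt t1 t2 → v ∈ S) ∧ collidersInAux S t2 q

/-- Every collider on the walk lies in `S`. -/
def CollidersIn (S : Set V) : {a b : V} → G.Walk a b → Prop
  | _, _, .nil _ => True
  | _, _, .cons t _ q => collidersInAux S t q

def noncollUnblAux : (u : V) → LinkType → {b c : V} → G.Walk b c → Prop
  | _, _, _, _, .nil _ => True
  | u, t1, v, _, .cons t2 _ q =>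
      (¬ colliderAt t1 t2 → unblockableAt G u v q.first t1 t2) ∧ noncollUnblAux v t2 q

/-- Every interior non-collider on the walk is unblockable. -/
def NoncollidersUnblockable : {a b : V} → G.Walk a b → Prop
  | _, _, .nil _ => True
  | a, _, .cons t _ q => noncollUnblAux a t q

/-- The set of edges occurring on a walk (directed edges as ordered pairs in `E_d`,
bidirected edges as unordered pairs). -/
def edges : {a b : V} → G.Walk a b → Set ((V × V) ⊕ Sym2 V)
  | _, _, .nil _ => ∅
  | a, _, .cons t _ p =>
      insert (match t with
        | .fwd => Sum.inl (a, p.first)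
        | .bwd => Sum.inl (p.first, a)
        | .bi => Sum.inr s(a, p.first)) p.edges

/-- Concatenation of walks. -/
def append : {a b c : V} → G.Walk a b → G.Walk b c → G.Walk a c
  | _, _, _, .nil _, q => q
  | _, _, _, .cons t h p, q => .cons t h (p.append q)

/-- A walk `v_0, …, v_{n+1}` is a path if no node besides the final endpoint occurs more
than once, i.e. `v_0, …, v_n` are pairwise distinct. -/
def IsPath {a b : V} (p : G.Walk a b) : Prop := p.support.dropLast.Nodup

end DMG.Walk

/-- `A` is σ-separated from `B` given `C` in `G`: every walk from a node of `A` to a node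
of `B` is σ-blocked given `C`. -/
def DMG.sigmaSep (G : DMG V) (A B C : Set V) : Prop :=
  ∀ a ∈ A, ∀ b ∈ B, ∀ p : G.Walk a b, ¬ p.sigmaOpen C

/-- The lifted dependency graph of `G`, on two copies of `V`
(`Sum.inl` is the past copy `V_0`, `Sum.inr` the future copy `V_1`). -/
def DMG.lift (G : DMG V) : DMG (V ⊕ V) where
  Ed := {e | ∃ u v, (u, v) ∈ G.Ed ∧
        (e = (Sum.inl u, Sum.inl v) ∨ e = (Sum.inl u, Sum.inr v) ∨
         e = (Sum.inr u, Sum.inr v))}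
  Ebi := {e | ∃ u v, s(u, v) ∈ G.Ebi ∧
        (e = s(Sum.inl u, Sum.inl v) ∨ e = s(Sum.inl u, Sum.inr v) ∨
         e = s(Sum.inr u, Sum.inl v) ∨ e = s(Sum.inr u, Sum.inr v))}

/-- `B` is E-separated from `A` given `C` in `G`:
`A_0` is σ-separated from `B_1` given `C_0 ∪ (C_1 \ B_1)` in the lifted dependency graph. -/
def DMG.ESep (G : DMG V) (A B C : Set V) : Prop :=
  G.lift.sigmaSep (Sum.inl '' A) (Sum.inr '' B)
    ((Sum.inl '' C) ∪ ((Sum.inr '' C) \ (Sum.inr '' B)))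

/-- The independence model `I_E^G` of E-separation triples. -/
def DMG.IE (G : DMG V) : Set (Set V × Set V × Set V) :=
  {t | G.ESep t.1 t.2.1 t.2.2}


/-- The latent projection of `G` onto the observed nodes `O`: a directed edge when there is
a non-trivial directed walk whose interior nodes are all latent, and a bidirected edge when
there is a non-trivial collider-free walk with arrowheads at both endpoints whose interior
nodes are all latent. -/
def DMG.latentProj (G : DMG V) (O : Set V) : DMG O where
  Ed := {e | ∃ p : G.Walk e.1.val e.2.val,
          p.IsDirected ∧ 0 < p.length ∧ ∀ x ∈ p.interior, x ∉ O}
  Ebi := {e | ∃ u v : O, e = s(u, v) ∧ ∃ p : G.Walk u.val v.val,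
          p.headAtStart ∧ p.headAtEnd ∧ p.NoColliders ∧ 0 < p.length ∧
          ∀ x ∈ p.interior, x ∉ O}

/-- The last edge of the walk `p` before entering `scc_G(w)` has an arrowhead at its
endpoint in `scc_G(w)` (vacuous if the walk never leaves `scc_G(w)`). -/
def DMG.lastEdgeInto (G : DMG V) {a b : V} (w : V) (p : G.Walk a b) : Prop :=
  (∀ x ∈ p.support, x ∈ G.scc w) ∨
  ∃ (x y : V) (t : LinkType) (h : G.linkOK x y t) (p₁ : G.Walk a x) (p₂ : G.Walk y b),
    p = p₁.append (.cons t h p₂) ∧ x ∉ G.scc w ∧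
    (∀ z ∈ p₂.support, z ∈ G.scc w) ∧ t.headR

/-- An (asymmetric) inducing path from `v` to `w`: a non-trivial path such that every
collider on it is an ancestor of `v` or `w`, every interior non-collider is unblockable,
and the last edge before entering `scc_G(w)` points into `scc_G(w)`. -/
def DMG.IsInducingPath (G : DMG V) {v w : V} (p : G.Walk v w) : Prop :=
  0 < p.length ∧ p.IsPath ∧
  p.CollidersIn (G.anc {v, w}) ∧ p.NoncollidersUnblockable ∧ G.lastEdgeInto w p

/-!
Call a walk *inducing* if its colliders are ancestors of its endpoints and its interior
non-colliders are unblockable. In any DMG an inducing walk from `a` to `b` yields a σ-open one given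
any `D`: if a collider has no descendant in `D`, then neither has any node on a directed path from
it to `a` or `b`, so this directed path may replace the initial or final segment of the walk.

It remains to lift an asymmetric inducing path to an inducing walk from `v₀` to `w₁` in the lifted
graph. Follow the path in the past copy until it first enters `scc w` after its initial node; this
happens along an edge with an arrowhead there, as a tail would make an interior node blockable or
contradict the condition on the last edge. Cross over to the future copy along this edge,
and go to `w₁` by a directed path inside `scc w`.
-/

theorem LinkType.headR_or_eq_bwd (t : LinkType) : t.headR ∨ t = .bwd := by
  cases t <;> simp [LinkType.headR]

namespace DMG

variable {G : DMG V} {u v w a b c : V} {t t₁ t₂ : LinkType} {S D : Set V}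

theorem subset_anc : D ⊆ G.anc D := fun x hx => ⟨x, hx, .refl⟩

theorem mem_anc_of_edge (h : (a, b) ∈ G.Ed) (hb : b ∈ G.anc D) : a ∈ G.anc D := by
  obtain ⟨x, hx, hbx⟩ := hb
  exact ⟨x, hx, hbx.head h⟩

theorem mem_scc_self : a ∈ G.scc a := ⟨.refl, .refl⟩

theorem mem_scc_symm (h : a ∈ G.scc b) : b ∈ G.scc a := ⟨h.2, h.1⟩

theorem mem_scc_trans (hab : a ∈ G.scc b) (hbc : b ∈ G.scc c) : a ∈ G.scc c :=
  ⟨hab.1.trans hbc.1, hbc.2.trans hab.2⟩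

theorem exists_edge_of_edge_mem_scc (hba : (b, a) ∈ G.Ed) (ha : a ∈ G.scc b) :
    ∃ c ∈ G.scc b, (a, c) ∈ G.Ed := by
  rcases ha.1.cases_head with rfl | ⟨c, hac, hcb⟩
  · exact ⟨a, mem_scc_self, hba⟩
  · exact ⟨c, ⟨hcb, ha.2.tail hac⟩, hac⟩

/-- The requirement an inducing walk imposes on an interior node `b` with predecessor `u` and
successor `c` (along links `t₁` and `t₂`), where `S` is the set in which colliders must lie. -/
def InducingAt (G : DMG V) (S : Set V) (u b c : V) (t₁ t₂ : LinkType) : Prop :=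
  (colliderAt t₁ t₂ → b ∈ S) ∧ (¬ colliderAt t₁ t₂ → unblockableAt G u b c t₁ t₂)

theorem InducingAt.mem_scc_of_bwd (h : G.InducingAt S u b c .bwd t₂) : u ∈ G.scc b :=
  (h.2 fun hcol => hcol.1).1 rfl

theorem InducingAt.mem_scc_of_fwd (h : G.InducingAt S u b c t₁ .fwd) : c ∈ G.scc b :=
  (h.2 fun hcol => hcol.2).2 rfl

namespace Walk

/-- A walk is inducing if its colliders are ancestors of its endpoints and its interior
non-colliders are unblockable. This is the symmetric notion, for walks instead of paths. -/
def IsInducing (p : G.Walk a b) : Prop :=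
  p.CollidersIn (G.anc {a, b}) ∧ p.NoncollidersUnblockable

/-- Every node of `q` other than the last satisfies the requirement of an inducing walk with
colliders in `S`, when `q` is preceded by a node `u` and a link `t` from `u` to its first node. -/
def InducingAfter (S : Set V) (u : V) (t : LinkType) (q : G.Walk b c) : Prop :=
  q.collidersInAux S t ∧ q.noncollUnblAux u t

theorem isInducing_cons {h : G.linkOK a b t} {q : G.Walk b c} :
    (cons t h q).IsInducing ↔ q.InducingAfter (G.anc {a, c}) a t :=
  .rfl

theorem inducingAfter_nil : (nil a : G.Walk a a).InducingAfter S u t :=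
  ⟨trivial, trivial⟩

theorem inducingAfter_cons {h : G.linkOK a b t₂} {q : G.Walk b c} :
    (cons t₂ h q).InducingAfter S u t₁ ↔
      G.InducingAt S u a b t₁ t₂ ∧ q.InducingAfter S a t₂ :=
  and_and_and_comm

/-! ### Inducing walks are σ-connecting -/

theorem exists_sigmaOpenAux_of_ancestor (hab : G.ancestor a b) (ha : a ∉ G.anc D) :
    ∃ q : G.Walk a b, ∀ u t, q.sigmaOpenAux D u t := by
  induction hab using Relation.ReflTransGen.head_induction_on with
  | refl => exact ⟨.nil b, fun _ _ => trivial⟩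
  | @head a c hac _ ih =>
    obtain ⟨q, hq⟩ := ih fun hc => ha (mem_anc_of_edge hac hc)
    exact ⟨.cons .fwd hac q, fun _ _ =>
      ⟨⟨fun hcol => hcol.2.elim, fun _ _ haD => ha (subset_anc haD)⟩, hq _ _⟩⟩

theorem exists_sigmaOpen_of_ancestor_start (hca : G.ancestor c a) (hc : c ∉ G.anc D)
    (q : G.Walk c b) (hq : q.sigmaOpen D) : ∃ r : G.Walk a b, r.sigmaOpen D := by
  induction hca using Relation.ReflTransGen.head_induction_on with
  | refl => exact ⟨q, hq⟩
  | head hcd _ ih =>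
    refine ih (fun hd => hc (mem_anc_of_edge hcd hd)) (.cons .bwd hcd q) ?_
    cases q with
    | nil => trivial
    | cons => exact ⟨⟨fun hcol => hcol.1.elim, fun _ _ hcD => hc (subset_anc hcD)⟩, hq⟩

theorem InducingAfter.exists_sigmaOpen (D : Set V) {q : G.Walk c b}
    (hq : q.InducingAfter (G.anc {a, b}) u t) :
    (∃ r : G.Walk a b, r.sigmaOpen D) ∨ ∃ r : G.Walk c b, r.sigmaOpenAux D u t := by
  induction q generalizing u t with
  | nil => exact .inr ⟨.nil _, trivial⟩
  | @cons c d b t₂ h q ih =>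
    obtain ⟨⟨hcollider, hnoncollider⟩, hq⟩ := inducingAfter_cons.mp hq
    obtain hopen | ⟨r, hr⟩ := ih hq
    · exact .inl hopen
    by_cases hblocked : colliderAt t t₂ ∧ c ∉ G.anc D
    · obtain ⟨x, rfl | rfl, hcx⟩ := hcollider hblocked.1
      · exact .inl (exists_sigmaOpen_of_ancestor_start hcx hblocked.2 (.cons t₂ h r) hr)
      · obtain ⟨s, hs⟩ := exists_sigmaOpenAux_of_ancestor hcx hblocked.2
        exact .inr ⟨s, hs u t⟩
    · refine .inr ⟨.cons t₂ h r, ⟨fun hcol => ?_, fun hcol hblk => ?_⟩, hr⟩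
      · exact not_not.mp fun hc => hblocked ⟨hcol, hc⟩
      · exact (hblk (hnoncollider hcol)).elim

-- `sigmaOpen` tests interior nodes only, so `D` may contain the endpoints.
theorem IsInducing.exists_sigmaOpen {p : G.Walk a b} (hp : p.IsInducing) (D : Set V) :
    ∃ r : G.Walk a b, r.sigmaOpen D := by
  cases p with
  | nil => exact ⟨.nil a, trivial⟩
  | cons t h q =>
    obtain hopen | ⟨r, hr⟩ := (isInducing_cons.mp hp).exists_sigmaOpen D
    · exact hopen
    · exact ⟨.cons t h r, hr⟩

end Walk

/-! ### The last edge entering a strongly connected component -/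

theorem lastEdgeInto.of_cons {h : G.linkOK a b t} {q : G.Walk b c}
    (hlast : G.lastEdgeInto w (.cons t h q)) : G.lastEdgeInto w q := by
  rcases hlast with hscc | ⟨x, y, s, hxy, p₁, p₂, heq, hx, hscc, hs⟩
  · exact .inl fun x hx => hscc x (List.mem_cons_of_mem a hx)
  · cases p₁ with
    | nil => cases heq; exact .inl hscc
    | cons _ _ p₁ => cases heq; exact .inr ⟨x, y, s, hxy, p₁, p₂, rfl, hx, hscc, hs⟩

theorem lastEdgeInto.mem_scc_of_bwd {h : G.linkOK a b .bwd}
    (hlast : G.lastEdgeInto w (.cons .bwd h (.nil b))) : a ∈ G.scc w := by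
  rcases hlast with hscc | ⟨x, y, s, hxy, p₁, p₂, heq, -, -, hs⟩
  · exact hscc a List.mem_cons_self
  · cases p₁ with
    | nil => cases heq; exact hs.elim
    | cons _ _ p₁ => cases p₁ <;> cases heq

theorem Walk.InducingAfter.mem_scc_of_bwd {h : G.linkOK a b .bwd} {q : G.Walk b w}
    (hq : q.InducingAfter S a .bwd) (hlast : G.lastEdgeInto w (.cons .bwd h q)) :
    a ∈ G.scc b := by
  cases q with
  | nil => exact hlast.mem_scc_of_bwd
  | cons => exact (inducingAfter_cons.mp hq).1.mem_scc_of_bwd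

/-! ### Lifting inducing paths -/

theorem linkOK.lift_inl (h : G.linkOK a b t) : G.lift.linkOK (.inl a) (.inl b) t := by
  cases t <;> exact ⟨_, _, h, .inl rfl⟩

theorem linkOK.lift_inl_inr (h : G.linkOK a b t) (ht : t.headR) :
    G.lift.linkOK (.inl a) (.inr b) t := by
  cases t with
  | fwd | bi => exact ⟨_, _, h, .inr (.inl rfl)⟩
  | bwd => exact ht.elim

theorem linkOK_fwd_lift_inr (h : (a, b) ∈ G.Ed) :
    G.lift.linkOK (.inr a) (.inr b) .fwd :=
  ⟨a, b, h, .inr (.inr rfl)⟩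

theorem ancestor.lift_inl (h : G.ancestor a b) : G.lift.ancestor (.inl a) (.inl b) :=
  Relation.ReflTransGen.lift Sum.inl (fun _ _ hab => linkOK.lift_inl (t := .fwd) hab) _ _ h

theorem ancestor.lift_inr (h : G.ancestor a b) : G.lift.ancestor (.inr a) (.inr b) :=
  Relation.ReflTransGen.lift Sum.inr (fun _ _ => linkOK_fwd_lift_inr) _ _ h

theorem ancestor.lift_inl_inr (h : G.ancestor a b) (hne : a ≠ b) :
    G.lift.ancestor (.inl a) (.inr b) := by
  obtain rfl | ⟨c, hac, hcb⟩ := h.cases_head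
  · exact (hne rfl).elim
  · exact Relation.ReflTransGen.head (linkOK.lift_inl_inr (t := .fwd) hac trivial)
      (ancestor.lift_inr hcb)

theorem inl_mem_anc_lift (h : a ∈ G.anc {v, w}) (hne : a ≠ w) :
    .inl a ∈ G.lift.anc {.inl v, .inr w} := by
  obtain ⟨x, rfl | rfl, hax⟩ := h
  · exact ⟨.inl x, .inl rfl, ancestor.lift_inl hax⟩
  · exact ⟨.inr x, .inr rfl, ancestor.lift_inl_inr hax hne⟩

theorem inl_mem_scc_lift (h : a ∈ G.scc b) : .inl a ∈ G.lift.scc (.inl b) :=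
  ⟨ancestor.lift_inl h.1, ancestor.lift_inl h.2⟩

theorem inr_mem_scc_lift (h : a ∈ G.scc b) : .inr a ∈ G.lift.scc (.inr b) :=
  ⟨ancestor.lift_inr h.1, ancestor.lift_inr h.2⟩

-- A lifted link may lead to either copy: only a tail at `b` constrains its successor `d`.
theorem InducingAt.lift_inl {d : V ⊕ V} (h : G.InducingAt (G.anc {v, w}) u b c t₁ t₂)
    (hb : b ≠ w) (hd : t₂ = .fwd → d ∈ G.lift.scc (.inl b)) :
    G.lift.InducingAt (G.lift.anc {.inl v, .inr w}) (.inl u) (.inl b) d t₁ t₂ :=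
  ⟨fun hcol => inl_mem_anc_lift (h.1 hcol) hb,
    fun hcol => ⟨fun htail => inl_mem_scc_lift ((h.2 hcol).1 htail), hd⟩⟩

theorem exists_inducingAfter_lift_inr (S : Set (V ⊕ V)) (ha : a ∈ G.scc w) :
    ∃ q : G.lift.Walk (.inr a) (.inr w), ∀ u t, t.headR → q.InducingAfter S u t := by
  obtain ⟨haw, hwa⟩ := ha
  induction haw using Relation.ReflTransGen.head_induction_on with
  | refl => exact ⟨.nil _, fun _ _ _ => Walk.inducingAfter_nil⟩
  | @head a b hab hbw ih =>
    have hb : b ∈ G.scc a := ⟨hbw.trans hwa, .single hab⟩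
    obtain ⟨q, hq⟩ := ih (hwa.tail hab)
    refine ⟨.cons .fwd (linkOK_fwd_lift_inr hab) q, fun u t ht =>
      Walk.inducingAfter_cons.mpr ⟨⟨fun hcol => hcol.2.elim, fun _ => ⟨?_, ?_⟩⟩, hq _ _ trivial⟩⟩
    · rintro rfl
      exact ht.elim
    · exact fun _ => inr_mem_scc_lift hb

theorem Walk.InducingAfter.exists_lift {h : G.linkOK u b t} {q : G.Walk b w}
    (hq : q.InducingAfter (G.anc {v, w}) u t) (hlast : G.lastEdgeInto w (.cons t h q))
    (hb : b ∉ G.scc w) :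
    ∃ r : G.lift.Walk (.inl b) (.inr w),
      r.InducingAfter (G.lift.anc {.inl v, .inr w}) (.inl u) t := by
  induction q generalizing u t with
  | nil => exact (hb mem_scc_self).elim
  | @cons b c w t₂ hbc q ih =>
    obtain ⟨hat, hq⟩ := inducingAfter_cons.mp hq
    have hbw : b ≠ w := fun heq => hb (heq ▸ mem_scc_self)
    by_cases hc : c ∈ G.scc w
    · have hhead : t₂.headR := t₂.headR_or_eq_bwd.resolve_right fun hbwd => by
        subst hbwd
        exact hb (mem_scc_trans (hq.mem_scc_of_bwd hlast.of_cons) hc)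
      have hntail : t₂ ≠ .fwd := fun hfwd => by
        subst hfwd
        exact hb (mem_scc_trans (mem_scc_symm hat.mem_scc_of_fwd) hc)
      obtain ⟨r, hr⟩ := exists_inducingAfter_lift_inr (G.lift.anc {.inl v, .inr w}) hc
      exact ⟨.cons t₂ (linkOK.lift_inl_inr hbc hhead) r, inducingAfter_cons.mpr
        ⟨hat.lift_inl hbw fun hfwd => (hntail hfwd).elim, hr _ _ hhead⟩⟩
    · obtain ⟨r, hr⟩ := ih hq hlast.of_cons hc
      refine ⟨.cons t₂ (linkOK.lift_inl hbc) r, inducingAfter_cons.mpr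
        ⟨hat.lift_inl hbw fun hfwd => ?_, hr⟩⟩
      subst hfwd
      exact inl_mem_scc_lift hat.mem_scc_of_fwd

theorem exists_isInducing_lift_of_linkOK (h : G.linkOK v a t) (ht : t.headR) (ha : a ∈ G.scc w) :
    ∃ r : G.lift.Walk (.inl v) (.inr w), r.IsInducing := by
  obtain ⟨r, hr⟩ := exists_inducingAfter_lift_inr (G.lift.anc {.inl v, .inr w}) ha
  exact ⟨.cons t (linkOK.lift_inl_inr h ht) r, Walk.isInducing_cons.mpr (hr _ _ ht)⟩

theorem Walk.IsInducing.exists_lift {p : G.Walk v w} (hp : p.IsInducing) (hlen : 0 < p.length)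
    (hlast : G.lastEdgeInto w p) : ∃ r : G.lift.Walk (.inl v) (.inr w), r.IsInducing := by
  cases p with
  | nil => exact hlen.false.elim
  | @cons _ a _ t h q =>
    have hq := isInducing_cons.mp hp
    by_cases ha : a ∈ G.scc w
    · obtain ht | rfl := t.headR_or_eq_bwd
      · exact exists_isInducing_lift_of_linkOK h ht ha
      -- The path starts `v ← a` inside `scc w`: leave `v` along a directed cycle instead.
      · obtain ⟨c, hc, hvc⟩ := exists_edge_of_edge_mem_scc h (hq.mem_scc_of_bwd hlast)
        exact exists_isInducing_lift_of_linkOK (t := .fwd) hvc trivial (mem_scc_trans hc ha)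
    · obtain ⟨r, hr⟩ := hq.exists_lift hlast ha
      exact ⟨.cons t (linkOK.lift_inl h) r, isInducing_cons.mpr hr⟩

end DMG

theorem inducing_path_inseparable_general (G : DMG V) {v w : V} (p : G.Walk v w)
    (hlen : 0 < p.length) (hp : p.IsInducing) (hlast : G.lastEdgeInto w p) (D : Set (V ⊕ V)) :
    ¬ G.lift.sigmaSep {Sum.inl v} {Sum.inr w} D := by
  intro hsep
  obtain ⟨q, hq⟩ := hp.exists_lift hlen hlast
  obtain ⟨r, hr⟩ := hq.exists_sigmaOpen D
  exact hsep _ rfl _ rfl r hr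

/-- An (asymmetric) inducing path from `v` to `w` makes `w` inseparable from `v` in the
independence model `I_E`. -/
theorem inducing_path_inseparable {V : Type} [Fintype V] (G : DMG V) (v w : V)
    (p : G.Walk v w) (hp : G.IsInducingPath p) (C : Set V) (hC : v ∉ C) :
    (({v} : Set V), ({w} : Set V), C) ∉ G.IE := by
  obtain ⟨hlen, -, hcol, hnc, hlast⟩ := hp
  simpa only [DMG.IE, DMG.ESep, Set.mem_ofPred_eq, Set.image_singleton] using
    inducing_path_inseparable_general G p hlen ⟨hcol, hnc⟩ hlast _

end ESepPaper
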